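/- arXiv:1706.06036 — 2 statements merged into one kernel-verified Lean document; each statement's English description precedes it below -/
import Mathlib

section
/- Let Γ be a distance-regular graph with diameter D ≥ 2 and let θ_1 denote the second largest distinct eigenvalue of its adjacency matrix. If θ_1 < a_1, then D ≤ 3; moreover, if in addition D = 3, then b_1 < c_3. -/
/-!
In a connected regular graph, let `S` and `T` be nonempty vertex sets at distance at least `2` from
each other, each inducing a subgraph of average degree at least `a`. The vector `|T| 1_S - |S| 1_T`
is orthogonal to the constants, which form the eigenspace of the valency, and its Rayleigh quotient
is at least `a`; hence `a ≤ θ₁`.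

In a distance-regular graph the sphere `Γᵢ(x)` induces a regular graph of valency
`aᵢ = k - bᵢ - cᵢ`. If `D ≥ 4`, take `S = Γ(x)` and `T = Γ(y)` with `x` and `y` at distance `D`, so
that `a₁ ≤ θ₁`. If `D = 3` and `c₃ ≤ b₁`, take `S = Γ(x)` and `T = Γ₃(x)`: since
`a₃ = k - c₃ ≥ k - b₁ > a₁`, again `a₁ ≤ θ₁`.
-/

open SimpleGraph Finset

/-- `G` is a distance-regular graph with diameter `D` and intersection numbers
`b i` (number of neighbours of `y` at distance `i+1` from `x` when `dist x y = i`) and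
`c i` (number of neighbours of `y` at distance `i-1` from `x` when `dist x y = i`). -/
def IsDRG {V : Type*} [Fintype V] (G : SimpleGraph V) (D : ℕ) (b c : ℕ → ℕ) : Prop :=
  G.Connected ∧
  (∃ x y : V, G.dist x y = D) ∧
  (∀ x y : V, G.dist x y ≤ D) ∧
  c 0 = 0 ∧ c 1 = 1 ∧ b D = 0 ∧
  (∀ i ≤ D, ∀ x y : V, G.dist x y = i →
    {z : V | G.Adj y z ∧ G.dist x z = i - 1}.ncard = c i ∧
    {z : V | G.Adj y z ∧ G.dist x z = i + 1}.ncard = b i)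

/-- `G` contains a `t`-claw: a vertex together with `t` pairwise nonadjacent neighbours
(an induced `K_{1,t}`). -/
def HasClaw {V : Type*} (G : SimpleGraph V) (t : ℕ) : Prop :=
  ∃ (x : V) (s : Finset V), s.card = t ∧ (∀ y ∈ s, G.Adj x y) ∧
    (s : Set V).Pairwise fun y z => ¬ G.Adj y z

/-- `θ` is an eigenvalue of the (real) adjacency matrix of `G`. -/
def IsAdjEigenvalue {V : Type*} [Fintype V] (G : SimpleGraph V) [DecidableRel G.Adj]
    (θ : ℝ) : Prop :=
  ∃ v : V → ℝ, v ≠ 0 ∧ (G.adjMatrix ℝ).mulVec v = θ • v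

/-- `G` contains an induced quadrangle: vertices `x, z₁, y, z₂` with
`dist x y = dist z₁ z₂ = 2` inducing a 4-cycle. -/
def HasQuadrangle {V : Type*} (G : SimpleGraph V) : Prop :=
  ∃ x z₁ y z₂ : V, G.dist x y = 2 ∧ G.dist z₁ z₂ = 2 ∧
    G.Adj x z₁ ∧ G.Adj z₁ y ∧ G.Adj y z₂ ∧ G.Adj z₂ x

/-- The diameter-3 intersection array `{β₀,β₁,β₂; γ₁,γ₂,γ₃}`. -/
def arr3 (b c : ℕ → ℕ) (β₀ β₁ β₂ γ₁ γ₂ γ₃ : ℕ) : Prop :=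
  b 0 = β₀ ∧ b 1 = β₁ ∧ b 2 = β₂ ∧ c 1 = γ₁ ∧ c 2 = γ₂ ∧ c 3 = γ₃

section Rayleigh

open Matrix

theorem re_inner_map_self_le_of_orthogonal {𝕜 E : Type*} [RCLike 𝕜] [NormedAddCommGroup E]
    [InnerProductSpace 𝕜 E] [FiniteDimensional 𝕜 E] {T : E →ₗ[𝕜] E} (hT : T.IsSymmetric)
    {θ : ℝ} {u : E}
    (hu : ∀ (μ : ℝ) (v : E), Module.End.HasEigenvector T (μ : 𝕜) v → θ < μ → inner 𝕜 v u = 0) :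
    RCLike.re (inner 𝕜 u (T u)) ≤ θ * ‖u‖ ^ 2 := by
  set e := hT.eigenvectorBasis rfl
  set μ := hT.eigenvalues rfl
  have inner_map (i) : inner 𝕜 (e i) (T u) = μ i * inner 𝕜 (e i) u := by
    rw [← hT, hT.apply_eigenvectorBasis, inner_smul_left, RCLike.conj_ofReal]
  calc RCLike.re (inner 𝕜 u (T u))
      = ∑ i, μ i * ‖inner 𝕜 (e i) u‖ ^ 2 := by
        rw [← e.sum_inner_mul_inner, map_sum]
        refine sum_congr rfl fun i _ => ?_
        rw [inner_map, mul_left_comm, ← inner_conj_symm u, RCLike.conj_mul]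
        norm_cast
    _ ≤ ∑ i, θ * ‖inner 𝕜 (e i) u‖ ^ 2 := by
        refine sum_le_sum fun i _ => ?_
        rcases le_or_gt (μ i) θ with hi | hi
        · gcongr
        · simp [hu (μ i) (e i) (hT.hasEigenvector_eigenvectorBasis rfl i) hi]
    _ = θ * ‖u‖ ^ 2 := by rw [← mul_sum, e.sum_sq_norm_inner_right]

theorem dotProduct_mulVec_le_of_orthogonal {n : Type*} [Fintype n] {A : Matrix n n ℝ}
    (hA : A.IsHermitian) {θ : ℝ} {u : n → ℝ}
    (hu : ∀ (μ : ℝ) (v : n → ℝ), v ≠ 0 → A *ᵥ v = μ • v → θ < μ → v ⬝ᵥ u = 0) :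
    u ⬝ᵥ A *ᵥ u ≤ θ * (u ⬝ᵥ u) := by
  classical
  have h := re_inner_map_self_le_of_orthogonal (isSymmetric_toEuclideanLin_iff.mpr hA)
    (θ := θ) (u := WithLp.toLp 2 u) fun μ v hv hμ => by
      have hAv : A *ᵥ v.ofLp = μ • v.ofLp := congrArg WithLp.ofLp hv.apply_eq_smul
      rw [EuclideanSpace.inner_eq_star_dotProduct, star_trivial, dotProduct_comm]
      exact hu μ v.ofLp (by simpa using hv.2) hAv hμ
  rw [← real_inner_self_eq_norm_sq, EuclideanSpace.inner_toLp_toLp, toLpLin_toLp,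
    EuclideanSpace.inner_toLp_toLp, star_trivial, dotProduct_comm] at h
  exact h

end Rayleigh

section Indicator

open Matrix

variable {n R : Type*} [Fintype n] [NonAssocSemiring R]

theorem indicator_one_dotProduct (S : Finset n) (f : n → R) :
    (S : Set n).indicator 1 ⬝ᵥ f = ∑ z ∈ S, f z := by
  classical
  simp [dotProduct, Set.indicator_apply]

theorem indicator_one_dotProduct_indicator_one [DecidableEq n] (S T : Finset n) :
    (S : Set n).indicator 1 ⬝ᵥ (T : Set n).indicator (1 : n → R) = #(S ∩ T) := by
  simp [indicator_one_dotProduct, Set.indicator_apply]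

end Indicator

section Adjacency

open Matrix

variable {V : Type*} {G : SimpleGraph V} [DecidableRel G.Adj]

theorem card_interedges_eq_sum (S T : Finset V) :
    #(G.interedges S T) = ∑ z ∈ S, #{w ∈ T | G.Adj z w} := by
  simp only [SimpleGraph.interedges, Rel.interedges, card_filter, sum_product]

theorem interedges_eq_empty_of_forall_one_lt_dist {S T : Finset V}
    (hST : ∀ z ∈ S, ∀ w ∈ T, 1 < G.dist z w) : G.interedges S T = ∅ := by
  refine eq_empty_of_forall_notMem fun ⟨z, w⟩ hzw => ?_
  obtain ⟨hz, hw, hadj⟩ := G.mem_interedges_iff.mp hzw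
  exact (hST z hz w hw).ne' (dist_eq_one_iff_adj.mpr hadj)

variable [Fintype V]

theorem eq_of_adjMatrix_mulVec_eq_smul (hconn : G.Connected) {k : ℕ}
    (hreg : G.IsRegularOfDegree k) {v : V → ℝ} (hv : G.adjMatrix ℝ *ᵥ v = (k : ℝ) • v) (x y : V) :
    v x = v y := by
  classical
  refine (G.lapMatrix_mulVec_eq_zero_iff_forall_reachable).mp ?_ x y (hconn.preconnected x y)
  ext z
  rw [lapMatrix_mulVec_apply, hreg.degree_eq, ← adjMatrix_mulVec_apply, hv, Pi.smul_apply,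
    smul_eq_mul, sub_self, Pi.zero_apply]

theorem dotProduct_adjMatrix_mulVec_le (hconn : G.Connected) {k : ℕ}
    (hreg : G.IsRegularOfDegree k) {θ : ℝ}
    (hθ : ∀ μ, IsAdjEigenvalue G μ → μ = k ∨ μ ≤ θ) {u : V → ℝ} (hu : ∑ z, u z = 0) :
    u ⬝ᵥ G.adjMatrix ℝ *ᵥ u ≤ θ * (u ⬝ᵥ u) := by
  refine dotProduct_mulVec_le_of_orthogonal (isHermitian_adjMatrix ℝ G) fun μ v hv hAv hμ => ?_
  obtain rfl : μ = k := (hθ μ ⟨v, hv, hAv⟩).resolve_right hμ.not_ge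
  obtain ⟨x⟩ := hconn.nonempty
  simp only [dotProduct, eq_of_adjMatrix_mulVec_eq_smul hconn hreg hAv _ x, ← mul_sum, hu, mul_zero]

theorem indicator_dotProduct_adjMatrix_mulVec_indicator {R : Type*} [NonAssocSemiring R]
    (S T : Finset V) :
    (S : Set V).indicator 1 ⬝ᵥ G.adjMatrix R *ᵥ (T : Set V).indicator 1 =
      #(G.interedges S T) := by
  classical
  rw [indicator_one_dotProduct, card_interedges_eq_sum, Nat.cast_sum]
  refine sum_congr rfl fun z _ => ?_
  simp only [adjMatrix_mulVec_apply, Set.indicator_apply, mem_coe, Pi.one_apply, sum_boole,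
    neighborFinset_eq_filter, filter_filter]
  congr 2
  ext w
  simp [and_comm]

theorem exists_sum_eq_zero_and_mul_le_dotProduct_adjMatrix_mulVec {a : ℝ} {S T : Finset V}
    (hS : S.Nonempty) (hT : T.Nonempty) (hST : ∀ z ∈ S, ∀ w ∈ T, 1 < G.dist z w)
    (haS : a * #S ≤ #(G.interedges S S)) (haT : a * #T ≤ #(G.interedges T T)) :
    ∃ u : V → ℝ, ∑ z, u z = 0 ∧ 0 < u ⬝ᵥ u ∧ a * (u ⬝ᵥ u) ≤ u ⬝ᵥ G.adjMatrix ℝ *ᵥ u := by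
  classical
  have hTS : ∀ w ∈ T, ∀ z ∈ S, 1 < G.dist w z := fun w hw z hz =>
    dist_comm (G := G) ▸ hST z hz w hw
  have hdisj : S ∩ T = ∅ := disjoint_iff_inter_eq_empty.mp <| disjoint_left.mpr fun z hzS hzT =>
    (hST z hzS z hzT).not_ge (by simp)
  let u : V → ℝ :=
    (#T : ℝ) • (S : Set V).indicator 1 - (#S : ℝ) • (T : Set V).indicator 1
  have hnorm : u ⬝ᵥ u = #T ^ 2 * #S + #S ^ 2 * #T := by
    simp only [u, sub_dotProduct, dotProduct_sub, smul_dotProduct, dotProduct_smul, smul_eq_mul,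
      indicator_one_dotProduct_indicator_one, inter_self, inter_comm T S, hdisj, card_empty,
      Nat.cast_zero]
    ring
  have hquad : u ⬝ᵥ G.adjMatrix ℝ *ᵥ u =
      #T ^ 2 * #(G.interedges S S) + #S ^ 2 * #(G.interedges T T) := by
    simp only [u, mulVec_sub, mulVec_smul, sub_dotProduct, dotProduct_sub, smul_dotProduct,
      dotProduct_smul, smul_eq_mul, indicator_dotProduct_adjMatrix_mulVec_indicator,
      interedges_eq_empty_of_forall_one_lt_dist hST, interedges_eq_empty_of_forall_one_lt_dist hTS,
      card_empty, Nat.cast_zero]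
    ring
  refine ⟨u, by simp [u, Set.indicator_apply, mul_comm], ?_, ?_⟩
  · have := hS.card_pos
    have := hT.card_pos
    rw [hnorm]
    positivity
  · calc a * (u ⬝ᵥ u)
        = (#T : ℝ) ^ 2 * (a * #S) + #S ^ 2 * (a * #T) := by rw [hnorm]; ring
      _ ≤ (#T : ℝ) ^ 2 * #(G.interedges S S) + #S ^ 2 * #(G.interedges T T) := by gcongr
      _ = u ⬝ᵥ G.adjMatrix ℝ *ᵥ u := hquad.symm

theorem le_of_forall_one_lt_dist (hconn : G.Connected) {k : ℕ} (hreg : G.IsRegularOfDegree k)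
    {θ : ℝ} (hθ : ∀ μ, IsAdjEigenvalue G μ → μ = k ∨ μ ≤ θ) {a : ℝ} {S T : Finset V}
    (hS : S.Nonempty) (hT : T.Nonempty) (hST : ∀ z ∈ S, ∀ w ∈ T, 1 < G.dist z w)
    (haS : a * #S ≤ #(G.interedges S S)) (haT : a * #T ≤ #(G.interedges T T)) : a ≤ θ := by
  obtain ⟨u, hsum, hpos, hle⟩ :=
    exists_sum_eq_zero_and_mul_le_dotProduct_adjMatrix_mulVec hS hT hST haS haT
  exact le_of_mul_le_mul_right (hle.trans (dotProduct_adjMatrix_mulVec_le hconn hreg hθ hsum)) hpos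

end Adjacency

section Spheres

variable {V : Type*} [Fintype V] {G : SimpleGraph V}

/-- The sphere `Γᵢ(x)` of radius `i` around `x` in the graph metric, as a finset. Since `G.dist` is
`0` between different components, it is meant for connected graphs. -/
noncomputable def distSphere (G : SimpleGraph V) (x : V) (i : ℕ) : Finset V := {w | G.dist x w = i}

theorem mem_distSphere {x w : V} {i : ℕ} : w ∈ distSphere G x i ↔ G.dist x w = i := by
  simp [distSphere]

theorem distSphere_nonempty_of_le_dist (hconn : G.Connected) {x y : V} {i : ℕ}
    (hi : i ≤ G.dist x y) : (distSphere G x i).Nonempty := by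
  obtain ⟨p, hp⟩ := hconn.exists_walk_length_eq_dist x y
  refine ⟨p.getVert i, mem_distSphere.mpr ?_⟩
  rw [← length_eq_dist_of_subwalk hp (p.isSubwalk_take i), Walk.take_length]
  omega

theorem one_lt_dist_of_mem_distSphere_of_add_lt_dist (hconn : G.Connected) {x y z w : V} {i j : ℕ}
    (hz : z ∈ distSphere G x i) (hw : w ∈ distSphere G y j) (hij : i + j + 1 < G.dist x y) :
    1 < G.dist z w := by
  rw [mem_distSphere] at hz hw
  have hxzy := hconn.dist_triangle (u := x) (v := z) (w := y)
  have hzwy := hconn.dist_triangle (u := z) (v := w) (w := y)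
  rw [dist_comm (u := w)] at hzwy
  omega

theorem one_lt_dist_of_mem_distSphere_of_add_one_lt (hconn : G.Connected) {x z w : V} {i j : ℕ}
    (hz : z ∈ distSphere G x i) (hw : w ∈ distSphere G x j) (hij : i + 1 < j) :
    1 < G.dist z w := by
  rw [mem_distSphere] at hz hw
  have := hconn.dist_triangle (u := x) (v := z) (w := w)
  omega

theorem degree_eq_sum_card_filter_distSphere [DecidableRel G.Adj] (x z : V) :
    G.degree z =
      ∑ j ∈ Icc (G.dist x z - 1) (G.dist x z + 1), #{w ∈ distSphere G x j | G.Adj z w} := by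
  classical
  rw [← card_neighborFinset_eq_degree, card_eq_sum_card_fiberwise (f := G.dist x)
    (t := Icc (G.dist x z - 1) (G.dist x z + 1))]
  · refine sum_congr rfl fun j _ => congrArg card ?_
    ext w
    simp [mem_distSphere, and_comm]
  · intro w hw
    have := Adj.diff_dist_adj (u := x) ((G.mem_neighborFinset z w).mp hw)
    simp only [coe_Icc, Set.mem_Icc]
    omega

end Spheres

namespace IsDRG

variable {V : Type*} [Fintype V] {G : SimpleGraph V} [DecidableRel G.Adj] {D : ℕ} {b c : ℕ → ℕ}

/-- For `i = 0` the truncated `i - 1` is `0`, and the count is `0` since `z = x`. -/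
theorem card_filter_distSphere_sub_one (h : IsDRG G D b c) {x z : V} {i : ℕ}
    (hz : z ∈ distSphere G x i) : #{w ∈ distSphere G x (i - 1) | G.Adj z w} = c i := by
  obtain ⟨-, -, hle, -, -, -, hcount⟩ := h
  have hdist := mem_distSphere.mp hz
  rw [← (hcount i (hdist ▸ hle x z) x z hdist).1, ← Set.ncard_coe_finset]
  simp [mem_distSphere, and_comm]

theorem card_filter_distSphere_add_one (h : IsDRG G D b c) {x z : V} {i : ℕ}
    (hz : z ∈ distSphere G x i) : #{w ∈ distSphere G x (i + 1) | G.Adj z w} = b i := by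
  obtain ⟨-, -, hle, -, -, -, hcount⟩ := h
  have hdist := mem_distSphere.mp hz
  rw [← (hcount i (hdist ▸ hle x z) x z hdist).2, ← Set.ncard_coe_finset]
  simp [mem_distSphere, and_comm]

theorem isRegularOfDegree (h : IsDRG G D b c) : G.IsRegularOfDegree (b 0) := by
  intro x
  rw [← h.card_filter_distSphere_add_one (mem_distSphere.mpr (dist_self (v := x))),
    ← card_neighborFinset_eq_degree]
  congr 1
  ext w
  simp [mem_distSphere]

theorem card_filter_distSphere (h : IsDRG G D b c) {x z : V} {i : ℕ}
    (hz : z ∈ distSphere G x i) :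
    #{w ∈ distSphere G x i | G.Adj z w} + b i + c i = b 0 := by
  have hdeg := degree_eq_sum_card_filter_distSphere (G := G) x z
  have hc := h.card_filter_distSphere_sub_one hz
  have hb := h.card_filter_distSphere_add_one hz
  have hc₀ : c 0 = 0 := h.2.2.2.1
  rw [h.isRegularOfDegree.degree_eq, mem_distSphere.mp hz] at hdeg
  cases i with
  | zero => simp_all [sum_Icc_succ_top]
  | succ i =>
    rw [Nat.add_sub_cancel] at hdeg hc
    rw [sum_Icc_succ_top (by omega), sum_Icc_succ_top (by omega), Icc_self, sum_singleton] at hdeg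
    omega

theorem card_interedges_distSphere (h : IsDRG G D b c) (x : V) (i : ℕ) :
    (#(G.interedges (distSphere G x i) (distSphere G x i)) : ℝ) =
      (b 0 - b i - c i) * #(distSphere G x i) := by
  rw [card_interedges_eq_sum, mul_comm, ← nsmul_eq_mul, Nat.cast_sum]
  refine sum_eq_card_nsmul fun z hz => ?_
  rw [← h.card_filter_distSphere hz]
  push_cast
  ring

theorem le_of_separated_distSpheres (h : IsDRG G D b c) {θ : ℝ}
    (hθ : ∀ μ, IsAdjEigenvalue G μ → μ = b 0 ∨ μ ≤ θ) {a : ℝ} {x y : V} {i j : ℕ}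
    (hx : (distSphere G x i).Nonempty) (hy : (distSphere G y j).Nonempty)
    (hsep : ∀ z ∈ distSphere G x i, ∀ w ∈ distSphere G y j, 1 < G.dist z w)
    (hi : a ≤ b 0 - b i - c i) (hj : a ≤ b 0 - b j - c j) : a ≤ θ := by
  refine le_of_forall_one_lt_dist h.1 h.isRegularOfDegree hθ hx hy hsep ?_ ?_ <;>
  · rw [h.card_interedges_distSphere]
    gcongr

end IsDRG

/-- if the second largest distinct adjacency eigenvalue `θ₁` of a DRG
satisfies `θ₁ < a₁`, then `D ≤ 3`; moreover `D = 3` implies `b₁ < c₃`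
(here `a₁ = k - b₁ - c₁`). -/
theorem statement10 {V : Type*} [Fintype V] (G : SimpleGraph V) [DecidableRel G.Adj]
    (D : ℕ) (b c : ℕ → ℕ) (θ1 : ℝ)
    (hdrg : IsDRG G D b c) (hD : 2 ≤ D)
    (he1 : IsAdjEigenvalue G θ1) (hlt : θ1 < (b 0 : ℝ))
    (hsec : ∀ θ, IsAdjEigenvalue G θ → θ = (b 0 : ℝ) ∨ θ ≤ θ1)
    (hsmall : θ1 < (((b 0 : ℤ) - b 1 - c 1 : ℤ) : ℝ)) :
    D ≤ 3 ∧ (D = 3 → b 1 < c 3) := by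
  have ⟨hconn, ⟨x, y, hxy⟩, _, _, _, hbD, _⟩ := hdrg
  have hyx : G.dist y x = D := dist_comm.trans hxy
  have hΓx : (distSphere G x 1).Nonempty := distSphere_nonempty_of_le_dist (y := y) hconn (by omega)
  have hΓy : (distSphere G y 1).Nonempty := distSphere_nonempty_of_le_dist (y := x) hconn (by omega)
  push_cast at hsmall
  constructor
  · by_contra! hD4
    exact hsmall.not_ge <| hdrg.le_of_separated_distSpheres hsec hΓx hΓy
      (fun z hz w hw => one_lt_dist_of_mem_distSphere_of_add_lt_dist hconn hz hw (by omega))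
      le_rfl le_rfl
  · rintro rfl
    by_contra! hc₃
    have ha₃ : (b 0 : ℝ) - b 1 - c 1 ≤ b 0 - b 3 - c 3 := by
      have : (c 3 : ℝ) ≤ b 1 := mod_cast hc₃
      rw [hbD, Nat.cast_zero]
      linarith
    exact hsmall.not_ge <| hdrg.le_of_separated_distSpheres hsec hΓx ⟨y, mem_distSphere.mpr hxy⟩
      (fun z hz w hw => one_lt_dist_of_mem_distSphere_of_add_one_lt hconn hz hw (by omega))
      le_rfl ha₃
end

section
/- Let Γ be a geometric distance-regular graph with diameter D ≥ 3, and suppose Γ contains a 3-claw but no 4-claws. Then either k = 3(a_1+1) and c_2 = 1, or D = 3 and c_2 ≥ 2. -/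
/-!
Call the chosen Delsarte cliques lines and let `θ` be the smallest eigenvalue of the adjacency
matrix `A`. Counting neighbours shows that each vertex is on `-θ` lines, so the point-line incidence
matrix `N` satisfies `N * Nᵀ = A - θ`, and every `θ`-eigenfunction sums to zero over every line.
By distance-regularity the entries of any polynomial in `A` depend only on the distance. Applied to
a nonzero polynomial `p(A)` with `A * p(A) = θ • p(A)`, this gives `θ`-eigenfunctions
`y ↦ φ (dist x y)`. Summing these over a line shows that lines are maximal cliques, and that all
vertices off a line with at least one neighbour on it have the same number of neighbours on it,
which is also independent of the line.

If `c₂ ≥ 2`, comparing these numbers shows that the common neighbours of two vertices at distance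
two never form a clique. If moreover `D ≥ 4`, let `v` be the midpoint of a geodesic of length four
from `x` to `y`: two nonadjacent common neighbours of `x` and `v` together with two nonadjacent
common neighbours of `v` and `y` form a 4-claw at `v`.

If `c₂ = 1`, maximality of lines shows that a common neighbour of two adjacent vertices lies on
their line. Hence every neighbourhood is a disjoint union of cliques of size `a₁ + 1`, one for each
line, and the claw conditions say that some vertex is on exactly three lines.
-/

open SimpleGraph Finset

/-- `G` (a distance-regular graph with valency `k`) is geometric: it is non-complete and
there is a collection of Delsarte cliques (cliques of size `1 + k/(-θ_D)`, where `θ_D` is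
the smallest adjacency eigenvalue) such that every edge lies in exactly one of them. -/
def IsGeometric {V : Type*} [Fintype V] (G : SimpleGraph V) [DecidableRel G.Adj]
    (k : ℕ) : Prop :=
  (∃ x y : V, x ≠ y ∧ ¬ G.Adj x y) ∧
  ∃ (θ : ℝ) (𝒞 : Set (Finset V)),
    IsAdjEigenvalue G θ ∧ (∀ θ', IsAdjEigenvalue G θ' → θ ≤ θ') ∧
    (∀ C ∈ 𝒞, G.IsClique (C : Set V) ∧ (C.card : ℝ) = 1 + (k : ℝ) / (-θ)) ∧
    (∀ x y : V, G.Adj x y → ∃! C : Finset V, C ∈ 𝒞 ∧ x ∈ C ∧ y ∈ C)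

section EigenvectorPolynomial

open Polynomial

lemma exists_aeval_ne_zero_mul_aeval_eq_smul {K A : Type*} [Field K] [Ring A] [Algebra K A]
    {a : A} (ha : IsIntegral K a) {θ : K} (hθ : (minpoly K a).IsRoot θ) :
    ∃ p : K[X], aeval a p ≠ 0 ∧ a * aeval a p = θ • aeval a p := by
  obtain ⟨p, hp⟩ := dvd_iff_isRoot.2 hθ
  refine ⟨p, fun hpa => ?_, ?_⟩
  · have hp0 : p ≠ 0 := by
      rintro rfl
      exact minpoly.ne_zero ha (by rw [hp, mul_zero])
    have hdeg := natDegree_le_of_dvd (minpoly.dvd K a hpa) hp0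
    rw [hp, natDegree_mul (X_sub_C_ne_zero θ) hp0, natDegree_X_sub_C] at hdeg
    omega
  · have hmin := minpoly.aeval K a
    rwa [hp, map_mul, map_sub, aeval_X, aeval_C, sub_mul, ← Algebra.smul_def,
      sub_eq_zero] at hmin

lemma aeval_mul_eq_eval_smul {R A : Type*} [CommRing R] [Ring A] [Algebra R A] {a m : A} {θ : R}
    (h : a * m = θ • m) (p : R[X]) : aeval a p * m = p.eval θ • m := by
  obtain ⟨q, hq⟩ := X_sub_C_dvd_sub_C_eval (a := θ) (p := p)
  have hm : (a - algebraMap R A θ) * m = 0 := by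
    rw [sub_mul, h, Algebra.smul_def, sub_self]
  rw [sub_eq_iff_eq_add.1 hq, mul_comm, map_add, map_mul, map_sub, aeval_X, aeval_C, aeval_C,
    add_mul, mul_assoc, hm, mul_zero, zero_add, ← Algebra.smul_def]
  simp

end EigenvectorPolynomial

section Distance

variable {V : Type*} {G : SimpleGraph V} {x y : V}

lemma exists_dist_eq_of_dist_eq_add (hconn : G.Connected) {m n : ℕ} (h : G.dist x y = m + n) :
    ∃ z, G.dist x z = m ∧ G.dist z y = n := by
  obtain ⟨p, hp⟩ := hconn.exists_walk_length_eq_dist x y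
  refine ⟨p.getVert m, ?_⟩
  have hxz := dist_le (p.take m)
  have hzy := dist_le (p.drop m)
  have htri := hconn.dist_triangle (u := x) (v := p.getVert m) (w := y)
  rw [Walk.take_length] at hxz
  rw [Walk.drop_length] at hzy
  omega

lemma dist_eq_two_iff :
    G.dist x y = 2 ↔ x ≠ y ∧ ¬ G.Adj x y ∧ (G.commonNeighbors x y).Nonempty := by
  rw [← edist_eq_two_iff, SimpleGraph.dist, ENat.toNat_eq_iff two_ne_zero]
  rfl

lemma coe_neighborFinset_filter_dist_eq_one [Fintype (G.neighborSet y)] :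
    (({z ∈ G.neighborFinset y | G.dist x z = 1} : Finset V) : Set V) = G.commonNeighbors x y := by
  ext z
  simp [mem_commonNeighbors, dist_eq_one_iff_adj, and_comm]

end Distance

namespace IsDRG

variable {V : Type*} [Fintype V] {G : SimpleGraph V} {D : ℕ} {b c : ℕ → ℕ}

lemma exists_dist_eq (h : IsDRG G D b c) {i : ℕ} (hi : i ≤ D) : ∃ x y, G.dist x y = i := by
  obtain ⟨hconn, ⟨x, y, hxy⟩, -⟩ := h
  obtain ⟨z, hxz, -⟩ :=
    exists_dist_eq_of_dist_eq_add hconn (hxy.trans (Nat.add_sub_cancel' hi).symm)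
  exact ⟨x, z, hxz⟩

lemma two_le_diam (h : IsDRG G D b c) {x y : V} (hne : x ≠ y) (hxy : ¬ G.Adj x y) : 2 ≤ D :=
  (h.1.one_lt_dist_of_ne_of_not_adj hne hxy).trans_le (h.2.2.1 x y)

lemma card_neighborFinset_filter_dist_eq_pred [DecidableRel G.Adj] (h : IsDRG G D b c) (x y : V) :
    #{z ∈ G.neighborFinset y | G.dist x z = G.dist x y - 1} = c (G.dist x y) := by
  obtain ⟨-, -, hle, -, -, -, hbc⟩ := h
  rw [← (hbc _ (hle x y) x y rfl).1, ← Set.ncard_coe_finset]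
  simp

lemma card_neighborFinset_filter_dist_eq_succ [DecidableRel G.Adj] (h : IsDRG G D b c) (x y : V) :
    #{z ∈ G.neighborFinset y | G.dist x z = G.dist x y + 1} = b (G.dist x y) := by
  obtain ⟨-, -, hle, -, -, -, hbc⟩ := h
  rw [← (hbc _ (hle x y) x y rfl).2, ← Set.ncard_coe_finset]
  simp

lemma ncard_commonNeighbors_of_dist_eq_two (h : IsDRG G D b c) {x y : V} (hxy : G.dist x y = 2) :
    (G.commonNeighbors x y).ncard = c 2 := by
  classical
  have hcard := h.card_neighborFinset_filter_dist_eq_pred x y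
  rw [hxy] at hcard
  rw [← coe_neighborFinset_filter_dist_eq_one, Set.ncard_coe_finset, ← hcard]

lemma c_two_pos (h : IsDRG G D b c) (hD : 2 ≤ D) : 0 < c 2 := by
  obtain ⟨x, y, hxy⟩ := h.exists_dist_eq hD
  rw [← h.ncard_commonNeighbors_of_dist_eq_two hxy, Set.ncard_pos]
  exact (dist_eq_two_iff.1 hxy).2.2

lemma eq_of_mem_commonNeighbors (h : IsDRG G D b c) (hc : c 2 = 1) {x y u v : V}
    (hne : x ≠ y) (hxy : ¬ G.Adj x y) (hu : u ∈ G.commonNeighbors x y)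
    (hv : v ∈ G.commonNeighbors x y) : u = v := by
  have hcard := h.ncard_commonNeighbors_of_dist_eq_two (dist_eq_two_iff.2 ⟨hne, hxy, u, hu⟩)
  exact (Set.ncard_le_one).1 (hcard.trans hc).le u hu v hv

lemma degree_eq [DecidableRel G.Adj] (h : IsDRG G D b c) (x : V) : G.degree x = b 0 := by
  have hcard := h.card_neighborFinset_filter_dist_eq_succ x x
  rwa [dist_self, filter_true_of_mem fun z hz =>
    dist_eq_one_iff_adj.2 ((G.mem_neighborFinset x z).1 hz)] at hcard

lemma sum_neighborFinset_dist [DecidableRel G.Adj] {R : Type*} [CommRing R] (h : IsDRG G D b c)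
    (g : ℕ → R) (x y : V) :
    ∑ z ∈ G.neighborFinset y, g (G.dist x z) =
      c (G.dist x y) * g (G.dist x y - 1) +
        ((b 0 : R) - b (G.dist x y) - c (G.dist x y)) * g (G.dist x y) +
        b (G.dist x y) * g (G.dist x y + 1) := by
  have hpred := h.card_neighborFinset_filter_dist_eq_pred x y
  have hsucc := h.card_neighborFinset_filter_dist_eq_succ x y
  set i := G.dist x y
  have hdist (z) (hz : z ∈ G.neighborFinset y) :
      G.dist x z = i - 1 ∨ G.dist x z = i ∨ G.dist x z = i + 1 := by
    have := ((G.mem_neighborFinset y z).1 hz).diff_dist_adj (u := x)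
    omega
  have hterm (z) (hz : z ∈ G.neighborFinset y) : g (G.dist x z) =
      (if G.dist x z = i - 1 then g (i - 1) - g i else 0) + g i +
        (if G.dist x z = i + 1 then g (i + 1) - g i else 0) := by
    have := hdist z hz
    split_ifs with hp hs hs
    · omega
    · rw [hp]; ring
    · rw [hs]; ring
    · rw [show G.dist x z = i by omega]; ring
  rw [sum_congr rfl hterm, sum_add_distrib, sum_add_distrib, ← sum_filter, ← sum_filter]
  simp only [sum_const, nsmul_eq_mul, hpred, hsucc, card_neighborFinset_eq_degree, h.degree_eq]
  ring

lemma ncard_commonNeighbors_of_adj (h : IsDRG G D b c) {x y : V} (hxy : G.Adj x y) :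
    ((G.commonNeighbors x y).ncard : ℤ) = b 0 - b 1 - c 1 := by
  classical
  have hsum := h.sum_neighborFinset_dist (fun n => if n = 1 then (1 : ℤ) else 0) x y
  rw [← coe_neighborFinset_filter_dist_eq_one, Set.ncard_coe_finset, card_filter]
  simpa [dist_eq_one_iff_adj.2 hxy] using hsum

lemma exists_aeval_adjMatrix_apply_eq [DecidableEq V] [DecidableRel G.Adj] (h : IsDRG G D b c)
    (p : Polynomial ℝ) :
    ∃ φ : ℕ → ℝ, ∀ x y, Polynomial.aeval (G.adjMatrix ℝ) p x y = φ (G.dist x y) := by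
  induction p using Polynomial.induction_on with
  | C a =>
    refine ⟨fun n => if n = 0 then a else 0, fun x y => ?_⟩
    simp [Matrix.algebraMap_matrix_apply, h.1.dist_eq_zero_iff]
  | add p q hp hq =>
    obtain ⟨φ, hφ⟩ := hp
    obtain ⟨χ, hχ⟩ := hq
    exact ⟨φ + χ, fun x y => by rw [map_add, Matrix.add_apply, hφ, hχ, Pi.add_apply]⟩
  | monomial n a hp =>
    obtain ⟨φ, hφ⟩ := hp
    refine ⟨fun i => c i * φ (i - 1) + ((b 0 : ℝ) - b i - c i) * φ i + b i * φ (i + 1),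
      fun x y => ?_⟩
    rw [pow_succ, ← mul_assoc, map_mul, Polynomial.aeval_X, mul_adjMatrix_apply]
    simp_rw [hφ]
    exact h.sum_neighborFinset_dist φ x y

end IsDRG

/-- `φ` is the cosine sequence of `G` for `θ`: the functions `y ↦ φ (dist x y)` satisfy the
eigenvalue equation of the adjacency operator for `θ` and are normalised to be `1` at `x`. -/
structure IsCosineSequence {V : Type*} [Fintype V] (G : SimpleGraph V) [DecidableRel G.Adj]
    (θ : ℝ) (φ : ℕ → ℝ) : Prop where
  apply_zero : φ 0 = 1
  sum_neighborFinset : ∀ x y, ∑ z ∈ G.neighborFinset y, φ (G.dist x z) = θ * φ (G.dist x y)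

section CosineSequence

variable {V : Type*} [Fintype V] {G : SimpleGraph V} [DecidableRel G.Adj] {D : ℕ} {b c : ℕ → ℕ}
  {θ : ℝ}

lemma IsAdjEigenvalue.isRoot_minpoly [DecidableEq V] (hθ : IsAdjEigenvalue G θ) :
    (minpoly ℝ (G.adjMatrix ℝ)).IsRoot θ := by
  obtain ⟨v, hv, hAv⟩ := hθ
  rw [← Matrix.minpoly_toLin', ← Module.End.hasEigenvalue_iff_isRoot]
  exact Module.End.hasEigenvalue_of_hasEigenvector
    ⟨Module.End.mem_eigenspace_iff.2 (by rwa [Matrix.toLin'_apply]), hv⟩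

lemma IsDRG.exists_isCosineSequence (h : IsDRG G D b c) (hθ : IsAdjEigenvalue G θ) :
    ∃ φ, IsCosineSequence G θ φ := by
  classical
  obtain ⟨p, hM, hAM⟩ := exists_aeval_ne_zero_mul_aeval_eq_smul
    (Matrix.isIntegral (G.adjMatrix ℝ)) hθ.isRoot_minpoly
  obtain ⟨φ, hφ⟩ := h.exists_aeval_adjMatrix_apply_eq p
  have hMM := aeval_mul_eq_eval_smul hAM p
  set M := Polynomial.aeval (G.adjMatrix ℝ) p
  have hφ0 : φ 0 ≠ 0 := by
    -- `M` is symmetric and `M * M` is a multiple of `M`, so a zero diagonal makes its rows vanish.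
    intro hφ0
    refine hM (Matrix.ext fun x y => ?_)
    have hxx : ∑ z, M x z ^ 2 = 0 := by
      have hxx := congrFun (congrFun hMM x) x
      rw [Matrix.mul_apply, Matrix.smul_apply, hφ x x, dist_self, hφ0, smul_zero] at hxx
      rw [← hxx]
      exact sum_congr rfl fun z _ => by rw [sq, hφ z x, dist_comm, ← hφ x z]
    exact pow_eq_zero_iff two_ne_zero |>.1 <|
      (sum_eq_zero_iff_of_nonneg fun z _ => sq_nonneg (M x z)).1 hxx y (mem_univ y)
  refine ⟨fun n => φ n / φ 0, div_self hφ0, fun x y => ?_⟩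
  have hyx := congrFun (congrFun hAM y) x
  rw [adjMatrix_mul_apply, Matrix.smul_apply, smul_eq_mul, hφ] at hyx
  simp_rw [hφ, dist_comm (v := x)] at hyx
  rw [← sum_div, hyx, mul_div_assoc]

lemma IsCosineSequence.apply_one_ne_zero [Nonempty V] {φ : ℕ → ℝ} (hφ : IsCosineSequence G θ φ)
    (hθ : θ ≠ 0) : φ 1 ≠ 0 := by
  intro hφ1
  obtain ⟨x⟩ := ‹Nonempty V›
  have hsum := hφ.sum_neighborFinset x x
  rw [dist_self, hφ.apply_zero, mul_one, sum_eq_zero] at hsum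
  · exact hθ hsum.symm
  · intro z hz
    rw [dist_eq_one_iff_adj.2 ((G.mem_neighborFinset x z).1 hz), hφ1]

end CosineSequence

namespace HasClaw

variable {V : Type*} {G : SimpleGraph V}

lemma of_le {m n : ℕ} (h : HasClaw G n) (hmn : m ≤ n) : HasClaw G m := by
  obtain ⟨x, s, rfl, hadj, hind⟩ := h
  obtain ⟨t, hts, ht⟩ := exists_subset_card_eq hmn
  exact ⟨x, t, ht, fun y hy => hadj y (hts hy), hind.mono (coe_subset.2 hts)⟩

lemma of_commonNeighbors_of_three_lt_dist (hconn : G.Connected) {x v y : V}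
    (hxy : 3 < G.dist x y) {s t : Finset V} (hs : G.IsIndepSet (s : Set V))
    (ht : G.IsIndepSet (t : Set V)) (hsx : (s : Set V) ⊆ G.commonNeighbors x v)
    (hty : (t : Set V) ⊆ G.commonNeighbors v y) : HasClaw G (#s + #t) := by
  classical
  have hfar (p) (hp : p ∈ s) (q) (hq : q ∈ t) : 1 < G.dist p q := by
    have hxp := dist_eq_one_iff_adj.2 (hsx hp).1
    have hqy := dist_eq_one_iff_adj.2 (hty hq).2.symm
    have htri := hconn.dist_triangle (u := x) (v := p) (w := y)
    have htri' := hconn.dist_triangle (u := p) (v := q) (w := y)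
    omega
  have hnadj (p) (hp : p ∈ s) (q) (hq : q ∈ t) : ¬ G.Adj p q := fun hpq =>
    (hfar p hp q hq).ne' (dist_eq_one_iff_adj.2 hpq)
  have hdisj : Disjoint s t := disjoint_left.2 fun p hp hp' => by simpa using hfar p hp p hp'
  refine ⟨v, s ∪ t, card_union_of_disjoint hdisj, fun z hz => ?_, ?_⟩
  · exact (mem_union.1 hz).elim (fun hz => (hsx hz).2) fun hz => (hty hz).1
  · rw [coe_union, Set.pairwise_union]
    exact ⟨hs, ht, fun p hp q hq _ => ⟨hnadj p hp q hq, fun hqp => hnadj p hp q hq hqp.symm⟩⟩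

end HasClaw

/-- `L` is a family of cliques of `G`, called lines, such that every edge lies on exactly one of
them. -/
structure IsLineSystem {V : Type*} (G : SimpleGraph V) (L : Finset (Finset V)) : Prop where
  isClique : ∀ C ∈ L, G.IsClique (C : Set V)
  existsUnique_line : ∀ x y, G.Adj x y → ∃! C, C ∈ L ∧ x ∈ C ∧ y ∈ C

namespace IsLineSystem

variable {V : Type*} {G : SimpleGraph V} {L : Finset (Finset V)}

lemma eq_of_adj (hL : IsLineSystem G L) {x y : V} (hxy : G.Adj x y) {C C' : Finset V}
    (hC : C ∈ L) (hx : x ∈ C) (hy : y ∈ C) (hC' : C' ∈ L) (hx' : x ∈ C') (hy' : y ∈ C') :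
    C = C' :=
  (hL.existsUnique_line x y hxy).unique ⟨hC, hx, hy⟩ ⟨hC', hx', hy'⟩

variable [DecidableEq V]

lemma exists_card_le_of_hasClaw (hL : IsLineSystem G L) {n : ℕ} (h : HasClaw G n) :
    ∃ x, n ≤ #{C ∈ L | x ∈ C} := by
  obtain ⟨x, s, rfl, hadj, hind⟩ := h
  have hline : ∀ y ∈ s, ∃ C ∈ L, x ∈ C ∧ y ∈ C := fun y hy =>
    (hL.existsUnique_line x y (hadj y hy)).exists
  choose! ℓ hℓ hxℓ hyℓ using hline
  refine ⟨x, card_le_card_of_injOn ℓ (fun y hy => ?_) fun y hy z hz hyz => ?_⟩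
  · exact mem_coe.2 (mem_filter.2 ⟨hℓ y hy, hxℓ y hy⟩)
  · by_contra hne
    exact hind hy hz hne (hL.isClique _ (hℓ y hy) (hyℓ y hy) (hyz ▸ hyℓ z hz) hne)

lemma hasClaw_card (hL : IsLineSystem G L) (hcard : ∀ C ∈ L, 2 ≤ #C)
    (hmem : ∀ C ∈ L, ∀ x ∈ C, ∀ y ∈ C, G.Adj x y → ∀ z ∈ G.commonNeighbors x y, z ∈ C) (x : V) :
    HasClaw G #{C ∈ L | x ∈ C} := by
  have hpoint : ∀ C ∈ L, ∃ y ∈ C, y ≠ x := fun C hC => exists_mem_ne (hcard C hC) x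
  have : Nonempty V := ⟨x⟩
  choose! p hpC hpx using hpoint
  have hxp : ∀ C ∈ L, x ∈ C → G.Adj x (p C) := fun C hC hx =>
    hL.isClique C hC hx (hpC C hC) (hpx C hC).symm
  have hline : ∀ C ∈ L, x ∈ C → ∀ C' ∈ L, x ∈ C' → p C' ∈ C → C = C' := fun C hC hx C' hC' hx' hp =>
    hL.eq_of_adj (hxp C' hC' hx') hC hx hp hC' hx' (hpC C' hC')
  refine ⟨x, ({C ∈ L | x ∈ C} : Finset _).image p, card_image_of_injOn ?_, ?_, ?_⟩
  · intro C hC C' hC' hpp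
    obtain ⟨hC, hx⟩ := mem_filter.1 hC
    obtain ⟨hC', hx'⟩ := mem_filter.1 hC'
    exact hline C hC hx C' hC' hx' (hpp ▸ hpC C hC)
  · simp only [forall_mem_image, mem_filter]
    exact fun C hC => hxp C hC.1 hC.2
  · simp only [Set.Pairwise, mem_coe, forall_mem_image, mem_filter]
    rintro C ⟨hC, hx⟩ C' ⟨hC', hx'⟩ hne hadj
    have hp : p C' ∈ C :=
      hmem C hC x hx (p C) (hpC C hC) (hxp C hC hx) (p C') ⟨hxp C' hC' hx', hadj⟩
    exact hne (congrArg p (hline C hC hx C' hC' hx' hp))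

variable [Fintype V] [DecidableRel G.Adj]

lemma sum_neighborFinset {M : Type*} [AddCommMonoid M] (hL : IsLineSystem G L) (f : V → M) (x : V) :
    ∑ y ∈ G.neighborFinset x, f y = ∑ C ∈ L with x ∈ C, ∑ y ∈ C.erase x, f y := by
  rw [← sum_biUnion]
  · refine sum_congr (Finset.ext fun y => ?_) fun _ _ => rfl
    simp only [mem_neighborFinset, mem_biUnion, mem_filter, mem_erase]
    constructor
    · intro hxy
      obtain ⟨C, hC, hx, hy⟩ := (hL.existsUnique_line x y hxy).exists
      exact ⟨C, ⟨hC, hx⟩, hxy.ne', hy⟩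
    · rintro ⟨C, ⟨hC, hx⟩, hne, hy⟩
      exact hL.isClique C hC hx hy hne.symm
  · intro C hC C' hC' hne
    obtain ⟨hC, hx⟩ := mem_filter.1 hC
    obtain ⟨hC', hx'⟩ := mem_filter.1 hC'
    refine disjoint_left.2 fun y hy hy' => hne ?_
    rw [mem_erase] at hy hy'
    exact hL.eq_of_adj (hL.isClique C hC hx hy.2 hy.1.symm) hC hx hy.2 hC' hx' hy'.2

lemma card_mul_eq_degree (hL : IsLineSystem G L) {t : ℕ} (ht : ∀ C ∈ L, #C = t) (x : V) :
    #{C ∈ L | x ∈ C} * (t - 1) = G.degree x := by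
  rw [← card_neighborFinset_eq_degree, card_eq_sum_ones (G.neighborFinset x),
    hL.sum_neighborFinset]
  simp_rw [← card_eq_sum_ones]
  refine (sum_const_nat fun C hC => ?_).symm
  obtain ⟨hC, hx⟩ := mem_filter.1 hC
  rw [card_erase_of_mem hx, ht C hC]

/-- If `N` is the point-line incidence matrix, then `N * Nᵀ = A - θ`, so `f` satisfies
`Nᵀ *ᵥ f = 0` because `‖Nᵀ *ᵥ f‖² = f ⬝ᵥ (A - θ) *ᵥ f = 0`. -/
lemma sum_line_eq_zero {R : Type*} [CommRing R] [LinearOrder R] [IsStrictOrderedRing R]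
    (hL : IsLineSystem G L) {θ : R} (hθ : ∀ x, (#{C ∈ L | x ∈ C} : R) = -θ) {f : V → R}
    (hf : ∀ x, ∑ y ∈ G.neighborFinset x, f y = θ * f x) {C : Finset V} (hC : C ∈ L) :
    ∑ y ∈ C, f y = 0 := by
  have hpoint (x : V) : ∑ C ∈ L with x ∈ C, ∑ y ∈ C, f y = 0 := calc
    _ = ∑ C ∈ L with x ∈ C, (f x + ∑ y ∈ C.erase x, f y) :=
      sum_congr rfl fun C hC => (add_sum_erase C f (mem_filter.1 hC).2).symm
    _ = 0 := by
      rw [sum_add_distrib, ← hL.sum_neighborFinset, hf, sum_const, nsmul_eq_mul, hθ]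
      ring
  have hsq : ∑ C ∈ L, (∑ y ∈ C, f y) ^ 2 = 0 := calc
    _ = ∑ x, ∑ C ∈ L with x ∈ C, f x * ∑ y ∈ C, f y := by
      simp_rw [sq, sum_mul (s := (_ : Finset V))]
      exact sum_comm' fun C x => by simp
    _ = 0 := sum_eq_zero fun x _ => by rw [← mul_sum, hpoint, mul_zero]
  exact pow_eq_zero_iff two_ne_zero |>.1 <|
    (sum_eq_zero_iff_of_nonneg fun C _ => sq_nonneg (∑ y ∈ C, f y)).1 hsq C hC

end IsLineSystem

/-- A line system of `G` all of whose lines have `t ≥ 2` points, together with a sequence `φ` for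
which the functions `y ↦ φ (dist z y)` sum to zero over every line. It carries the properties of
the Delsarte cliques of a geometric distance-regular graph that follow from `φ` being the cosine
sequence of the smallest eigenvalue. -/
structure IsDelsarteGeometry {V : Type*} (G : SimpleGraph V) (L : Finset (Finset V)) (t : ℕ)
    (φ : ℕ → ℝ) : Prop extends IsLineSystem G L where
  two_le : 2 ≤ t
  card_line : ∀ C ∈ L, #C = t
  apply_one_ne_zero : φ 1 ≠ 0
  sum_line : ∀ C ∈ L, ∀ z, ∑ y ∈ C, φ (G.dist z y) = 0

section Existence

variable {V : Type*} [Fintype V] {G : SimpleGraph V} [DecidableRel G.Adj]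

lemma IsGeometric.exists_isLineSystem {k : ℕ} (hgeo : IsGeometric G k) {x y : V}
    (hxy : G.Adj x y) :
    ∃ (θ : ℝ) (L : Finset (Finset V)) (t : ℕ), IsAdjEigenvalue G θ ∧ θ ≠ 0 ∧
      IsLineSystem G L ∧ 2 ≤ t ∧ (∀ C ∈ L, #C = t) ∧ -θ * ((t : ℝ) - 1) = k := by
  classical
  obtain ⟨-, θ, 𝒞, hθ, -, hdel, huniq⟩ := hgeo
  obtain ⟨C₀, ⟨hC₀, hx, hy⟩, -⟩ := huniq x y hxy
  have htwo : 2 ≤ #C₀ := one_lt_card.2 ⟨x, hx, y, hy, hxy.ne⟩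
  have hcard := (hdel C₀ hC₀).2
  have hθ0 : θ ≠ 0 := by
    rintro rfl
    rw [neg_zero, div_zero, add_zero] at hcard
    have : #C₀ = 1 := mod_cast hcard
    omega
  refine ⟨θ, ({C | C ∈ 𝒞} : Finset (Finset V)), #C₀, hθ, hθ0, ⟨?_, ?_⟩, htwo, ?_, ?_⟩
  · simpa using fun C hC => (hdel C hC).1
  · simpa using huniq
  · intro C hC
    exact_mod_cast (hdel C (by simpa using hC)).2.trans hcard.symm
  · rw [hcard]
    field_simp
    ring

lemma IsGeometric.exists_isDelsarteGeometry {D : ℕ} {b c : ℕ → ℕ} (hgeo : IsGeometric G (b 0))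
    (h : IsDRG G D b c) : ∃ L t φ, IsDelsarteGeometry G L t φ := by
  classical
  obtain ⟨u, v, hne, huv⟩ := hgeo.1
  obtain ⟨x, y, hxy⟩ := h.exists_dist_eq (one_le_two.trans (h.two_le_diam hne huv))
  obtain ⟨θ, L, t, hθ, hθ0, hL, htwo, hcard, hval⟩ :=
    hgeo.exists_isLineSystem (dist_eq_one_iff_adj.1 hxy)
  obtain ⟨φ, hφ⟩ := h.exists_isCosineSequence hθ
  have ht1 : (t : ℝ) - 1 ≠ 0 := by
    have : (2 : ℝ) ≤ t := mod_cast htwo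
    linarith
  have hlines (x : V) : (#{C ∈ L | x ∈ C} : ℝ) = -θ := by
    refine mul_right_cancel₀ ht1 (Eq.trans ?_ hval.symm)
    rw [← h.degree_eq x, ← hL.card_mul_eq_degree hcard x, Nat.cast_mul, Nat.cast_pred (by omega)]
  have : Nonempty V := ⟨x⟩
  exact ⟨L, t, φ, hL, htwo, hcard, hφ.apply_one_ne_zero hθ0, fun C hC z =>
    hL.sum_line_eq_zero hlines (hφ.sum_neighborFinset z) hC⟩

end Existence

namespace IsDelsarteGeometry

variable {V : Type*} {G : SimpleGraph V} {L : Finset (Finset V)} {t : ℕ} {φ : ℕ → ℝ}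

lemma exists_not_adj (hL : IsDelsarteGeometry G L t φ) {C : Finset V} (hC : C ∈ L) (z : V) :
    ∃ y ∈ C, ¬ G.Adj z y := by
  by_contra! hadj
  have hsum := hL.sum_line C hC z
  rw [sum_congr rfl fun y hy => by rw [dist_eq_one_iff_adj.2 (hadj y hy)], sum_const,
    nsmul_eq_mul, hL.card_line C hC] at hsum
  have ht : (t : ℝ) ≠ 0 := mod_cast (by have := hL.two_le; omega : t ≠ 0)
  exact mul_ne_zero ht hL.apply_one_ne_zero hsum

section AdjOnLine

variable [DecidableRel G.Adj]

/-- Only the distances `1` and `2` from `z` occur on `C`. -/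
lemma card_adj_mul_add (hL : IsDelsarteGeometry G L t φ) {C : Finset V} (hC : C ∈ L) {z : V}
    (hz : z ∉ C) (hadj : ∃ y ∈ C, G.Adj z y) :
    (#{y ∈ C | G.Adj z y} : ℝ) * (φ 1 - φ 2) + t * φ 2 = 0 := by
  obtain ⟨y, hy, hzy⟩ := hadj
  have hterm : ∀ w ∈ C, φ (G.dist z w) = (if G.Adj z w then φ 1 - φ 2 else 0) + φ 2 := by
    intro w hw
    split_ifs with hzw
    · rw [dist_eq_one_iff_adj.2 hzw, sub_add_cancel]
    · have hyw : G.Adj y w := hL.isClique C hC hy hw (by rintro rfl; exact hzw hzy)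
      rw [dist_eq_two_iff.2 ⟨by rintro rfl; exact hz hw, hzw, y, hzy, hyw.symm⟩, zero_add]
  have hsum := hL.sum_line C hC z
  rwa [sum_congr rfl hterm, sum_add_distrib, ← sum_filter, sum_const, sum_const, nsmul_eq_mul,
    nsmul_eq_mul, hL.card_line C hC] at hsum

lemma card_adj_eq_card_adj (hL : IsDelsarteGeometry G L t φ) {C C' : Finset V} (hC : C ∈ L)
    (hC' : C' ∈ L) {z z' : V} (hz : z ∉ C) (hz' : z' ∉ C') (hadj : ∃ y ∈ C, G.Adj z y)
    (hadj' : ∃ y ∈ C', G.Adj z' y) : #{y ∈ C | G.Adj z y} = #{y ∈ C' | G.Adj z' y} := by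
  have hcount := hL.card_adj_mul_add hC hz hadj
  have hcount' := hL.card_adj_mul_add hC' hz' hadj'
  have hφ : φ 1 - φ 2 ≠ 0 := by
    intro hφ
    have ht : (t : ℝ) ≠ 0 := mod_cast (by have := hL.two_le; omega : t ≠ 0)
    rw [hφ, mul_zero, zero_add, mul_eq_zero_iff_left ht] at hcount
    exact hL.apply_one_ne_zero (by linarith)
  exact_mod_cast mul_right_cancel₀ hφ (add_right_cancel (hcount.trans hcount'.symm))

end AdjOnLine

/-- A common neighbour `w` off the line `C` would be adjacent to all the neighbours of `y` on `C`,
and to `x` as well, although it has as many neighbours on `C` as `y`. -/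
lemma commonNeighbors_subset_line (hL : IsDelsarteGeometry G L t φ) {x y : V} (hne : x ≠ y)
    (hxy : ¬ G.Adj x y) (hclique : G.IsClique (G.commonNeighbors x y)) {C : Finset V}
    (hC : C ∈ L) (hx : x ∈ C) (hadj : ∃ v ∈ C, G.Adj y v) : G.commonNeighbors x y ⊆ C := by
  classical
  intro w hw
  by_contra hwC
  rw [mem_coe] at hwC
  have hyC : y ∉ C := fun hy => hxy (hL.isClique C hC hx hy hne)
  have hcard := hL.card_adj_eq_card_adj hC hC hyC hwC hadj ⟨x, hx, hw.1.symm⟩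
  have hsub : {v ∈ C | G.Adj y v} ⊆ {v ∈ C | G.Adj w v} := fun v hv => by
    obtain ⟨hvC, hyv⟩ := mem_filter.1 hv
    have hxv : G.Adj x v := hL.isClique C hC hx hvC (by rintro rfl; exact hxy hyv.symm)
    exact mem_filter.2 ⟨hvC, hclique hw ⟨hxv, hyv⟩ (by rintro rfl; exact hwC hvC)⟩
  have hxw : x ∈ ({v ∈ C | G.Adj w v} : Finset V) := mem_filter.2 ⟨hx, hw.1.symm⟩
  rw [← eq_of_subset_of_card_le hsub hcard.ge] at hxw
  exact hxy (mem_filter.1 hxw).2.symm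

lemma not_isClique_commonNeighbors (hL : IsDelsarteGeometry G L t φ) {x y : V} (hne : x ≠ y)
    (hxy : ¬ G.Adj x y) (hnontriv : (G.commonNeighbors x y).Nontrivial) :
    ¬ G.IsClique (G.commonNeighbors x y) := by
  intro hclique
  obtain ⟨u, hu, v, hv, huv⟩ := hnontriv
  obtain ⟨C, hC, hxC, huC⟩ := (hL.existsUnique_line x u hu.1).exists
  obtain ⟨C', hC', hyC', huC'⟩ := (hL.existsUnique_line y u hu.2).exists
  have hvC : v ∈ C := hL.commonNeighbors_subset_line hne hxy hclique hC hxC ⟨u, huC, hu.2⟩ hv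
  have hvC' : v ∈ C' := by
    rw [commonNeighbors_symm] at hclique hv
    exact hL.commonNeighbors_subset_line hne.symm (fun h => hxy h.symm) hclique hC' hyC'
      ⟨u, huC', hu.1⟩ hv
  have hCC' : C = C' := hL.eq_of_adj (hclique hu hv huv) hC huC hvC hC' huC' hvC'
  exact hxy (hL.isClique C hC hxC (hCC' ▸ hyC') hne)

variable [Fintype V] {D : ℕ} {b c : ℕ → ℕ}

lemma exists_isIndepSet_pair (hL : IsDelsarteGeometry G L t φ) (h : IsDRG G D b c)
    (hc : 1 < c 2) {x y : V} (hxy : G.dist x y = 2) :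
    ∃ s : Finset V, #s = 2 ∧ G.IsIndepSet (s : Set V) ∧ (s : Set V) ⊆ G.commonNeighbors x y := by
  classical
  obtain ⟨hne, hnadj, -⟩ := dist_eq_two_iff.1 hxy
  rw [← h.ncard_commonNeighbors_of_dist_eq_two hxy, Set.one_lt_ncard_iff_nontrivial] at hc
  have hclique := hL.not_isClique_commonNeighbors hne hnadj hc
  simp only [IsClique, Set.Pairwise, not_forall] at hclique
  obtain ⟨u, hu, v, hv, huv, hnuv⟩ := hclique
  refine ⟨{u, v}, card_pair huv, ?_, ?_⟩
  · rw [coe_pair, isIndepSet_iff, Set.pairwise_pair]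
    exact fun _ => ⟨hnuv, fun hvu => hnuv hvu.symm⟩
  · rw [coe_pair]
    exact Set.pair_subset hu hv

lemma hasClaw_four (hL : IsDelsarteGeometry G L t φ) (h : IsDRG G D b c) (hD : 4 ≤ D)
    (hc : 1 < c 2) : HasClaw G 4 := by
  obtain ⟨x, y, hxy⟩ := h.exists_dist_eq hD
  obtain ⟨v, hxv, hvy⟩ := exists_dist_eq_of_dist_eq_add h.1 (show G.dist x y = 2 + 2 from hxy)
  obtain ⟨s, hs, hsind, hsub⟩ := hL.exists_isIndepSet_pair h hc hxv
  obtain ⟨s', hs', hsind', hsub'⟩ := hL.exists_isIndepSet_pair h hc hvy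
  have hclaw := HasClaw.of_commonNeighbors_of_three_lt_dist h.1 (by omega) hsind hsind' hsub hsub'
  rwa [hs, hs'] at hclaw

/-- Otherwise `z` and a vertex of `C` not adjacent to `z` have the common neighbours `x` and `y`. -/
lemma mem_line_of_mem_commonNeighbors (hL : IsDelsarteGeometry G L t φ) (h : IsDRG G D b c)
    (hc : c 2 = 1) {C : Finset V} (hC : C ∈ L) {x y z : V} (hx : x ∈ C) (hy : y ∈ C)
    (hxy : G.Adj x y) (hz : z ∈ G.commonNeighbors x y) : z ∈ C := by
  by_contra hzC
  obtain ⟨u, hu, hzu⟩ := hL.exists_not_adj hC z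
  have hxu : G.Adj x u := hL.isClique C hC hx hu (by rintro rfl; exact hzu hz.1.symm)
  have hyu : G.Adj y u := hL.isClique C hC hy hu (by rintro rfl; exact hzu hz.2.symm)
  exact hxy.ne <| h.eq_of_mem_commonNeighbors hc (by rintro rfl; exact hzC hu) hzu
    ⟨hz.1.symm, hxu.symm⟩ ⟨hz.2.symm, hyu.symm⟩

lemma ncard_commonNeighbors_add_two (hL : IsDelsarteGeometry G L t φ) (h : IsDRG G D b c)
    (hc : c 2 = 1) {x y : V} (hxy : G.Adj x y) : (G.commonNeighbors x y).ncard + 2 = t := by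
  classical
  obtain ⟨C, hC, hx, hy⟩ := (hL.existsUnique_line x y hxy).exists
  have hcommon : G.commonNeighbors x y = ((C.erase x).erase y : Finset V) := by
    ext z
    rw [mem_coe, mem_erase, mem_erase]
    refine ⟨fun hz => ⟨hz.2.ne', hz.1.ne', ?_⟩, fun ⟨hzy, hzx, hzC⟩ => ⟨?_, ?_⟩⟩
    · exact hL.mem_line_of_mem_commonNeighbors h hc hC hx hy hxy hz
    · exact hL.isClique C hC hx hzC hzx.symm
    · exact hL.isClique C hC hy hzC hzy.symm
  have ht := hL.two_le
  rw [hcommon, Set.ncard_coe_finset, card_erase_of_mem (mem_erase.2 ⟨hxy.ne', hy⟩),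
    card_erase_of_mem hx, hL.card_line C hC]
  omega

lemma exists_card_lines_eq [DecidableEq V] (hL : IsDelsarteGeometry G L t φ)
    (h : IsDRG G D b c) (hc : c 2 = 1) {n : ℕ} (hclaw : HasClaw G n)
    (hclaw' : ¬ HasClaw G (n + 1)) : ∃ x, #{C ∈ L | x ∈ C} = n := by
  obtain ⟨x, hx⟩ := hL.exists_card_le_of_hasClaw hclaw
  have hxclaw : HasClaw G #{C ∈ L | x ∈ C} :=
    hL.hasClaw_card (fun C hC => hL.two_le.trans_eq (hL.card_line C hC).symm)
      (fun C hC y hy z hz hyz w hw =>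
        hL.mem_line_of_mem_commonNeighbors h hc hC hy hz hyz hw) x
  exact ⟨x, hx.antisymm' (not_lt.1 fun hlt => hclaw' (hxclaw.of_le hlt))⟩

lemma valency_eq_mul (hL : IsDelsarteGeometry G L t φ) (h : IsDRG G D b c) (hD : 1 ≤ D)
    (hc : c 2 = 1) {n : ℕ} (hclaw : HasClaw G n) (hclaw' : ¬ HasClaw G (n + 1)) :
    (b 0 : ℤ) = n * (((b 0 : ℤ) - b 1 - c 1) + 1) := by
  classical
  obtain ⟨x, hx⟩ := hL.exists_card_lines_eq h hc hclaw hclaw'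
  obtain ⟨y, z, hyz⟩ := h.exists_dist_eq hD
  have hadj := dist_eq_one_iff_adj.1 hyz
  have ht : (G.commonNeighbors y z).ncard + 1 = t - 1 := by
    rw [← hL.ncard_commonNeighbors_add_two h hc hadj]
    rfl
  have hval : n * ((G.commonNeighbors y z).ncard + 1) = b 0 := by
    rw [ht, ← h.degree_eq x, ← hL.card_mul_eq_degree hL.card_line x, hx]
  rw [← h.ncard_commonNeighbors_of_adj hadj]
  exact_mod_cast hval.symm

end IsDelsarteGeometry

theorem statement12_general {V : Type*} [Fintype V] (G : SimpleGraph V) [DecidableRel G.Adj]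
    (D : ℕ) (b c : ℕ → ℕ) (hdrg : IsDRG G D b c) (hgeo : IsGeometric G (b 0))
    (hclaw3 : HasClaw G 3) (hclaw4 : ¬ HasClaw G 4) :
    ((b 0 : ℤ) = 3 * (((b 0 : ℤ) - b 1 - c 1) + 1) ∧ c 2 = 1) ∨ (D ≤ 3 ∧ 2 ≤ c 2) := by
  obtain ⟨L, t, φ, hL⟩ := hgeo.exists_isDelsarteGeometry hdrg
  obtain ⟨x, y, hne, hxy⟩ := hgeo.1
  have hD : 2 ≤ D := hdrg.two_le_diam hne hxy
  rcases (Nat.succ_le_of_lt (hdrg.c_two_pos hD)).eq_or_lt' with hc | hc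
  · exact .inl ⟨hL.valency_eq_mul hdrg (one_le_two.trans hD) hc hclaw3 hclaw4, hc⟩
  · exact .inr ⟨not_lt.1 fun hD4 => hclaw4 (hL.hasClaw_four hdrg hD4 hc), hc⟩

/-- a geometric DRG with `D ≥ 3`, with a 3-claw but no 4-claws, satisfies
either `k = 3(a₁+1)` and `c₂ = 1`, or `D = 3` and `c₂ ≥ 2`. -/
theorem statement12 {V : Type*} [Fintype V] (G : SimpleGraph V) [DecidableRel G.Adj]
    (D : ℕ) (b c : ℕ → ℕ)
    (hdrg : IsDRG G D b c) (hD : 3 ≤ D) (hgeo : IsGeometric G (b 0))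
    (hclaw3 : HasClaw G 3) (hclaw4 : ¬ HasClaw G 4) :
    ((b 0 : ℤ) = 3 * (((b 0 : ℤ) - b 1 - c 1) + 1) ∧ c 2 = 1) ∨
    (D = 3 ∧ 2 ≤ c 2) :=
  (statement12_general G D b c hdrg hgeo hclaw3 hclaw4).imp_right fun ⟨hD3, hc⟩ =>
    ⟨hD3.antisymm hD, hc⟩
end
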